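/- Fix primes p_1, ..., p_m with m ≥ 2 and suppose r̄ := p_1 p_2 ⋯ p_m + 1 is a prime number with r̄ ≥ 5 (so r̄ − 1 = p_1 ⋯ p_m is composite). For each integer n' ≥ 2, consider the Construction-2 data built from p_1, ..., p_m and parameter n' (so n̄ = n'm, l = (r̄−1)^{n'}, with d_{w,y} and T_{w,y} defined with respect to r̄−1), and for any prime power q, any positive divisor u of q−1, and any primitive element ζ of GF(q^l), define for w ∈ {1, ..., n'−1} and y ∈ {1, ..., m} the repair bandwidth b'(n', w, y) = Σ_{(w',z) ≠ (w,y)} rank_{GF(q)}({ζ^{u(t + s·d_{w',z})} : t ∈ T_{w,y}, s ∈ {0, ..., r̄−2}}). Then for every ε > 0 there exists N such that for all n' ≥ N and all such q, u, ζ, w, y: b'(n', w, y) < (r̄/(r̄−1) + ε) · (n̄−1)·l/r̄. In particular, the ratio of b' to the cut-set bound b_min = (n̄−1)l/r̄ tends to r̄/(r̄−1) ≤ 5/4 as n̄ → ∞. -/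

import Mathlib

/-- `∏_{j=1}^{y-1} p_j` (the empty product is `1`). -/
def bigP (p : ℕ → ℕ) (y : ℕ) : ℕ := ∏ j ∈ Finset.Icc 1 (y - 1), p j

/-- `d_{w,y} = r^w · ∏_{j=1}^{y-1} p_j`. -/
def dwy (p : ℕ → ℕ) (r w y : ℕ) : ℕ := r ^ w * bigP p y

/-- The digit of `t` at position `pos = w·m + y` (`1 ≤ y ≤ m`) in the multi-base
expansion `t = Σ_{w,y} t_{wm+y} · d_{w,y}`, namely `(t / d_{w,y}) % p_y`. -/
def digit (p : ℕ → ℕ) (m r t pos : ℕ) : ℕ :=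
  t / dwy p r ((pos - 1) / m) ((pos - 1) % m + 1) % p ((pos - 1) % m + 1)

/-- The set `T_{w,y}` of Construction 2: for `w ≤ n'-2` the `t < l` whose digits
at positions `wm+y, …, wm+y+m-1` vanish; for `w = n'-1` the `t < l` whose digits
at positions `(n'-1)m+y, …, n'm` and `1, …, y-1` vanish. -/
def Tset (p : ℕ → ℕ) (m r n' l w y : ℕ) : Set ℕ :=
  if w + 1 < n' then
    {t : ℕ | t < l ∧ ∀ k < m, digit p m r t (w * m + y + k) = 0}
  else
    {t : ℕ | t < l ∧
      (∀ pos, (n' - 1) * m + y ≤ pos → pos ≤ n' * m → digit p m r t pos = 0) ∧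
      (∀ pos, 1 ≤ pos → pos ≤ y - 1 → digit p m r t pos = 0)}

/-!
Write `W i` for the weight of the `i`-th digit, so that `W (i + m) = r * W i` with `r = r̄ - 1`.
Vanishing digits make `T_{w,y}` a block `{M * a + b | a < K, b < R}` with `R ≤ M`, `K * R = l / r`
and `K * W (a₀ + m) = l`, where `M` divides `W i` for all `i ≥ a₀ + m`; here `a₀` is the position of
`(w, y)`, or `0` when the vanishing digits wrap around from the top to the bottom. Adding `s * W i`
with `s < r` moves only the remainders if `i < a₀` and only the quotients if `i ≥ a₀ + m`, so that
the exponents stay in a block of size `l / r` up to an error proportional to `W i`; the `m`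
positions in between contribute at most `l` each. Since the weights at least double from one
position to the next, the errors add up to `O(l)`, which is negligible against
`(n̄ - 1) * l / r` as `n̄ → ∞`.
-/

section

open Finset Module

section MixedRadix

/-- The weight of the digit at the (zero-based) position `i` in the mixed radix expansion with
bases `b 0, b 1, …`. -/
def radixWeight (b : ℕ → ℕ) (i : ℕ) : ℕ := ∏ j ∈ range i, b j

variable {b : ℕ → ℕ}

lemma radixWeight_zero (b : ℕ → ℕ) : radixWeight b 0 = 1 := prod_range_zero b

lemma radixWeight_succ (b : ℕ → ℕ) (i : ℕ) : radixWeight b (i + 1) = radixWeight b i * b i :=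
  prod_range_succ b i

lemma radixWeight_pos (hb : ∀ j, 0 < b j) (i : ℕ) : 0 < radixWeight b i :=
  prod_pos fun j _ => hb j

lemma radixWeight_dvd_radixWeight (b : ℕ → ℕ) {i j : ℕ} (hij : i ≤ j) :
    radixWeight b i ∣ radixWeight b j :=
  prod_dvd_prod_of_subset _ _ b (range_mono hij)

lemma sum_radixWeight_le (hb : ∀ j, 2 ≤ b j) (n : ℕ) :
    ∑ i ∈ range n, radixWeight b i ≤ radixWeight b n := by
  induction n with
  | zero => simp
  | succ n ih =>
    calc ∑ i ∈ range (n + 1), radixWeight b i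
        ≤ radixWeight b n + radixWeight b n := by rw [sum_range_succ]; gcongr
      _ = radixWeight b n * 2 := (mul_two _).symm
      _ ≤ radixWeight b (n + 1) := by rw [radixWeight_succ]; gcongr; exact hb n

lemma mod_radixWeight_add_of_digits_eq_zero {t i k : ℕ}
    (h : ∀ j < k, t / radixWeight b (i + j) % b (i + j) = 0) :
    t % radixWeight b (i + k) = t % radixWeight b i := by
  induction k with
  | zero => rfl
  | succ k ih =>
    rw [← add_assoc, radixWeight_succ, Nat.mod_mul, h k k.lt_succ_self, mul_zero, add_zero]
    exact ih fun j hj => h j (hj.trans k.lt_succ_self)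

variable {m : ℕ}

lemma radixWeight_add_period (hper : b.Periodic m) (i : ℕ) :
    radixWeight b (i + m) = radixWeight b m * radixWeight b i := by
  rw [add_comm, radixWeight, prod_range_add]
  simp only [add_comm m, hper _, radixWeight]

lemma radixWeight_mul_period_add (hper : b.Periodic m) (k i : ℕ) :
    radixWeight b (k * m + i) = radixWeight b m ^ k * radixWeight b i := by
  induction k with
  | zero => simp
  | succ k ih =>
    rw [add_one_mul, add_right_comm, radixWeight_add_period hper, ih, pow_succ', mul_assoc]

lemma radixWeight_mul_period (hper : b.Periodic m) (k : ℕ) :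
    radixWeight b (k * m) = radixWeight b m ^ k := by
  simpa [radixWeight_zero] using radixWeight_mul_period_add hper k 0

end MixedRadix

section ResidueBlock

/-- The numbers `M * a + c` with quotient part `a < K` and remainder part `c < R`; for `R ≤ M` these
are the numbers below `K * M` whose residue modulo `M` is less than `R`. -/
def residueBlock (M K R : ℕ) : Finset ℕ := image₂ (fun a c => M * a + c) (range K) (range R)

variable {M K R t : ℕ}

lemma card_residueBlock_le (M K R : ℕ) : #(residueBlock M K R) ≤ K * R := by
  simpa [residueBlock] using card_image₂_le (fun a c => M * a + c) (range K) (range R)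

lemma mem_residueBlock_of_lt_of_mod_lt (ht : t < M * K) (hmod : t % M < R) :
    t ∈ residueBlock M K R :=
  mem_image₂.2 ⟨t / M, mem_range.2 (Nat.div_lt_of_lt_mul ht), t % M, mem_range.2 hmod,
    Nat.div_add_mod t M⟩

lemma add_mul_mem_residueBlock_add_remainders {r s : ℕ} (ht : t ∈ residueBlock M K R)
    (hs : s < r) (d : ℕ) : t + s * d ∈ residueBlock M K (R + r * d) := by
  obtain ⟨a, ha, c, hc, rfl⟩ := mem_image₂.1 ht
  refine mem_image₂.2 ⟨a, ha, c + s * d, ?_, (add_assoc _ _ _).symm⟩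
  have hsd : s * d ≤ r * d := Nat.mul_le_mul_right d hs.le
  exact mem_range.2 (add_lt_add_of_lt_of_le (mem_range.1 hc) hsd)

lemma add_mul_mem_residueBlock_add_quotients {r s : ℕ} (ht : t ∈ residueBlock M K R)
    (hs : s < r) (e : ℕ) : t + s * (M * e) ∈ residueBlock M (K + r * e) R := by
  obtain ⟨a, ha, c, hc, rfl⟩ := mem_image₂.1 ht
  refine mem_image₂.2 ⟨a + s * e, ?_, c, hc, by ring⟩
  have hse : s * e ≤ r * e := Nat.mul_le_mul_right e hs.le
  exact mem_range.2 (add_lt_add_of_lt_of_le (mem_range.1 ha) hse)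

end ResidueBlock

section RepairSpan

/-- The space spanned by the vectors `v (t + s * d)` with `t ∈ T` and `s < r`. For
`v x = ζ ^ (u * x)`, its dimension is the contribution to the repair bandwidth of a helper node of
weight `d`. -/
def repairSpan (k : Type*) {V : Type*} [Semiring k] [AddCommMonoid V] [Module k V]
    (v : ℕ → V) (T : Set ℕ) (r d : ℕ) : Submodule k V :=
  Submodule.span k {x | ∃ t ∈ T, ∃ s < r, x = v (t + s * d)}

variable {k V : Type*} [Semiring k] [StrongRankCondition k] [AddCommMonoid V] [Module k V]

lemma finrank_repairSpan_le_card (v : ℕ → V) {T : Set ℕ} {r d : ℕ} {E : Finset ℕ}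
    (hE : ∀ t ∈ T, ∀ s < r, t + s * d ∈ E) : finrank k (repairSpan k v T r d) ≤ #E := by
  classical
  have hsub : {x | ∃ t ∈ T, ∃ s < r, x = v (t + s * d)} ⊆ (E.image v : Set V) := by
    rintro _ ⟨t, ht, s, hs, rfl⟩
    exact mem_coe.2 (mem_image_of_mem v (hE t ht s hs))
  calc finrank k (repairSpan k v T r d)
      ≤ finrank k (Submodule.span k (E.image v : Set V)) :=
        Submodule.finrank_mono (Submodule.span_mono hsub)
    _ ≤ #(E.image v) := finrank_span_finset_le_card _
    _ ≤ #E := card_image_le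

variable {M K R : ℕ} {T : Set ℕ}

lemma finrank_repairSpan_le_add_remainders (v : ℕ → V) (hT : T ⊆ residueBlock M K R) (r d : ℕ) :
    finrank k (repairSpan k v T r d) ≤ K * R + K * r * d :=
  calc finrank k (repairSpan k v T r d)
      ≤ #(residueBlock M K (R + r * d)) := finrank_repairSpan_le_card v fun _ ht _ hs =>
        add_mul_mem_residueBlock_add_remainders (hT ht) hs d
    _ ≤ K * (R + r * d) := card_residueBlock_le ..
    _ = K * R + K * r * d := by ring

lemma finrank_repairSpan_le_add_quotients (v : ℕ → V) (hT : T ⊆ residueBlock M K R) (hRM : R ≤ M)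
    (r : ℕ) {d : ℕ} (hMd : M ∣ d) : finrank k (repairSpan k v T r d) ≤ K * R + r * d := by
  obtain ⟨e, rfl⟩ := hMd
  calc finrank k (repairSpan k v T r (M * e))
      ≤ #(residueBlock M (K + r * e) R) := finrank_repairSpan_le_card v fun _ ht _ hs =>
        add_mul_mem_residueBlock_add_quotients (hT ht) hs e
    _ ≤ (K + r * e) * R := card_residueBlock_le ..
    _ = K * R + r * e * R := add_mul ..
    _ ≤ K * R + r * e * M := by gcongr
    _ = K * R + r * (M * e) := by ring

/-- A bound for the amount by which the node at position `i` contributes more than `l / r`, when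
`T` is contained in a block with `K` quotients modulo a divisor of the weight of position `a + m`.
The second summand is for the positions below `a`, the third for the `m` positions from `a`
on, and the first for the remaining ones. -/
def rankExcess (b : ℕ → ℕ) (m K a i : ℕ) : ℕ :=
  radixWeight b m * radixWeight b i
    + (if i ∈ range a then K * radixWeight b m * radixWeight b i else 0)
    + (if i ∈ Ico a (a + m) then K * radixWeight b (a + m) else 0)

variable {b : ℕ → ℕ} {m a : ℕ}

lemma finrank_repairSpan_radixWeight_le [Module.Finite k V] (v : ℕ → V)
    (hT : T ⊆ residueBlock M K R) (hRM : R ≤ M) (hM : M ∣ radixWeight b (a + m))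
    (hV : finrank k V ≤ K * radixWeight b (a + m)) (i : ℕ) :
    finrank k (repairSpan k v T (radixWeight b m) (radixWeight b i))
      ≤ K * R + rankExcess b m K a i := by
  unfold rankExcess
  rcases lt_or_ge i a with hlow | hge
  · have := finrank_repairSpan_le_add_remainders (k := k) v hT (radixWeight b m) (radixWeight b i)
    rw [if_pos (mem_range.2 hlow)]
    omega
  rcases lt_or_ge i (a + m) with hmid | hhigh
  · have := (repairSpan k v T (radixWeight b m) (radixWeight b i)).finrank_le
    rw [if_pos (mem_Ico.2 ⟨hge, hmid⟩)]
    omega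
  · have := finrank_repairSpan_le_add_quotients (k := k) v hT hRM (radixWeight b m)
      (hM.trans (radixWeight_dvd_radixWeight b hhigh))
    omega

lemma sum_rankExcess_le (hb : ∀ j, 2 ≤ b j) (hper : b.Periodic m) (K a n : ℕ) :
    ∑ i ∈ range n, rankExcess b m K a i
      ≤ radixWeight b m * radixWeight b n + (m + 1) * (K * radixWeight b (a + m)) := by
  have hlow : ∑ i ∈ range n ∩ range a, radixWeight b i ≤ radixWeight b a :=
    (sum_le_sum_of_subset inter_subset_right).trans (sum_radixWeight_le hb a)
  have hmid : #(range n ∩ Ico a (a + m)) ≤ m :=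
    (card_le_card inter_subset_right).trans_eq (by simp)
  simp only [rankExcess, sum_add_distrib, sum_ite_mem, sum_const, smul_eq_mul]
  simp only [← mul_sum]
  calc _ ≤ radixWeight b m * radixWeight b n + K * radixWeight b m * radixWeight b a
        + m * (K * radixWeight b (a + m)) := by gcongr; exact sum_radixWeight_le hb n
    _ = _ := by rw [radixWeight_add_period hper]; ring

end RepairSpan

lemma sum_product_range_Icc {α : Type*} [AddCommMonoid α] (f : ℕ → α) (n m : ℕ) :
    ∑ wz ∈ range n ×ˢ Icc 1 m, f (wz.1 * m + (wz.2 - 1)) = ∑ i ∈ range (n * m), f i := by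
  refine sum_nbij' (fun wz => wz.1 * m + (wz.2 - 1)) (fun i => (i / m, i % m + 1)) ?_ ?_ ?_ ?_
    fun _ _ => rfl
  · rintro ⟨w, z⟩ h
    simp only [mem_product, mem_range, mem_Icc] at h ⊢
    calc w * m + (z - 1) < (w + 1) * m := by rw [add_one_mul]; omega
      _ ≤ n * m := by gcongr; exact h.1
  · intro i hi
    have hm : 0 < m := Nat.pos_of_mul_pos_left (Nat.zero_lt_of_lt (mem_range.1 hi))
    simp only [mem_product, mem_range, mem_Icc] at hi ⊢
    exact ⟨Nat.div_lt_of_lt_mul (by rwa [mul_comm]), by omega, Nat.mod_lt i hm⟩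
  · rintro ⟨w, z⟩ h
    simp only [mem_product, mem_range, mem_Icc] at h
    have hz : z - 1 < m := by omega
    simp only [Nat.mul_comm w m, Nat.mul_add_div (Nat.zero_lt_of_lt hz), Nat.mul_add_mod,
      Nat.div_eq_of_lt hz, Nat.mod_eq_of_lt hz, add_zero, Nat.sub_add_cancel h.2.1]
  · intro i _
    simp only [Nat.add_sub_cancel, Nat.div_add_mod']

section Construction

/-- The set `T` lies in a block of at most `l / r` numbers, where `r = radixWeight b m` and
`l = r ^ (n + 1)`, whose modulus divides all weights from position `a + m` on and whose number of
quotients is `l` divided by the weight of position `a + m`. -/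
def HasBlockCover (b : ℕ → ℕ) (m n : ℕ) (T : Set ℕ) : Prop :=
  ∃ a M K R, T ⊆ residueBlock M K R ∧ R ≤ M ∧ M ∣ radixWeight b (a + m) ∧
    K * R = radixWeight b m ^ n ∧ K * radixWeight b (a + m) = radixWeight b m ^ (n + 1)

/-- The sequence of bases `p 1, …, p m, p 1, …, p m, …` of the multi-base expansion. -/
def cyclicBase (p : ℕ → ℕ) (m j : ℕ) : ℕ := p (j % m + 1)

variable {p : ℕ → ℕ} {m : ℕ}

lemma cyclicBase_periodic (p : ℕ → ℕ) (m : ℕ) : (cyclicBase p m).Periodic m := fun j => by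
  simp only [cyclicBase, Nat.add_mod_right]

lemma two_le_cyclicBase (hm : 0 < m) (hp : ∀ i ∈ Icc 1 m, 2 ≤ p i) (j : ℕ) :
    2 ≤ cyclicBase p m j :=
  hp _ (mem_Icc.2 ⟨Nat.le_add_left 1 _, Nat.mod_lt j hm⟩)

lemma radixWeight_cyclicBase_of_le {j : ℕ} (hj : j ≤ m) :
    radixWeight (cyclicBase p m) j = ∏ i ∈ Icc 1 j, p i := by
  rw [← Ico_add_one_right_eq_Icc, prod_Ico_eq_prod_range, Nat.add_sub_cancel]
  refine prod_congr rfl fun i hi => ?_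
  rw [cyclicBase, Nat.mod_eq_of_lt ((mem_range.1 hi).trans_le hj), add_comm]

local notation "W" => radixWeight (cyclicBase p m)

lemma dwy_eq_radixWeight (w : ℕ) {y : ℕ} (hy : y ∈ Icc 1 m) :
    dwy p (W m) w y = W (w * m + (y - 1)) := by
  rw [radixWeight_mul_period_add (cyclicBase_periodic p m),
    radixWeight_cyclicBase_of_le ((Nat.sub_le y 1).trans (mem_Icc.1 hy).2), dwy, bigP]

lemma digit_add_one (hm : 0 < m) (t i : ℕ) :
    digit p m (W m) t (i + 1) = t / W i % cyclicBase p m i := by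
  have hy : i % m + 1 ∈ Icc 1 m := mem_Icc.2 ⟨Nat.le_add_left 1 _, Nat.mod_lt i hm⟩
  rw [digit, Nat.add_sub_cancel, dwy_eq_radixWeight _ hy, Nat.add_sub_cancel, Nat.div_add_mod',
    cyclicBase]

lemma mod_radixWeight_eq_of_digit_eq_zero (hm : 0 < m) {t i j : ℕ} (hij : i ≤ j)
    (h : ∀ pos, i < pos → pos ≤ j → digit p m (W m) t pos = 0) :
    t % W j = t % W i := by
  obtain ⟨k, rfl⟩ := Nat.exists_eq_add_of_le hij
  refine mod_radixWeight_add_of_digits_eq_zero fun j hj => ?_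
  rw [← digit_add_one hm]
  exact h _ (by omega) (by omega)

lemma hasBlockCover_Tset_of_lt (hm : 0 < m) (hp : ∀ i ∈ Icc 1 m, 2 ≤ p i) {n w y : ℕ}
    (hw : w < n) (hy : y ∈ Icc 1 m) :
    HasBlockCover (cyclicBase p m) m n (Tset p m (W m) (n + 1) (W m ^ (n + 1)) w y) := by
  have hpos := radixWeight_pos fun j => two_pos.trans_le (two_le_cyclicBase hm hp j)
  have hper := cyclicBase_periodic p m
  obtain ⟨hy1, hym⟩ := mem_Icc.1 hy
  set a := w * m + (y - 1)
  have htop : a + m ≤ (n + 1) * m := by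
    have := Nat.mul_le_mul_right m (Nat.succ_le_of_lt hw)
    rw [Nat.succ_mul] at this
    rw [add_one_mul]
    omega
  obtain ⟨K, hK⟩ := radixWeight_dvd_radixWeight (cyclicBase p m) htop
  rw [radixWeight_mul_period hper] at hK
  refine ⟨a, W (a + m), K, W a, fun t ht => ?_, ?_, dvd_rfl, ?_, by rw [hK, mul_comm]⟩
  · rw [Tset, if_pos (Nat.succ_lt_succ hw)] at ht
    obtain ⟨hlt, hdigits⟩ := ht
    refine mem_residueBlock_of_lt_of_mod_lt (hK ▸ hlt) ?_
    rw [mod_radixWeight_eq_of_digit_eq_zero hm (Nat.le_add_right a m) fun pos hgt hle => ?_]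
    · exact Nat.mod_lt _ (hpos a)
    · obtain ⟨i, rfl⟩ := Nat.exists_eq_add_of_le (show w * m + y ≤ pos by omega)
      exact hdigits i (by omega)
  · exact Nat.le_of_dvd (hpos _) (radixWeight_dvd_radixWeight _ (Nat.le_add_right a m))
  · refine Nat.eq_of_mul_eq_mul_left (hpos m) ?_
    rw [← pow_succ', hK, radixWeight_add_period hper]
    ring

/-- Here the vanishing digits are those from `n * m + y` on and those below `y`: the former make
`t` small, the latter make it divisible by the weight of `y`. -/
lemma hasBlockCover_Tset_of_le (hm : 0 < m) (hp : ∀ i ∈ Icc 1 m, 2 ≤ p i) {n w y : ℕ}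
    (hw : n ≤ w) (hy : y ∈ Icc 1 m) :
    HasBlockCover (cyclicBase p m) m n (Tset p m (W m) (n + 1) (W m ^ (n + 1)) w y) := by
  have hpos := radixWeight_pos fun j => two_pos.trans_le (two_le_cyclicBase hm hp j)
  have hper := cyclicBase_periodic p m
  obtain ⟨hy1, hym⟩ := mem_Icc.1 hy
  refine ⟨0, W (y - 1), W m ^ n, 1, fun t ht => ?_, hpos _, ?_, mul_one _, ?_⟩
  · rw [Tset, if_neg (by omega)] at ht
    obtain ⟨hlt, hhigh, hlow⟩ := ht
    have htop : n * m + (y - 1) ≤ (n + 1) * m := by rw [add_one_mul]; omega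
    have hmod_top := mod_radixWeight_eq_of_digit_eq_zero hm htop fun pos hgt hle =>
      hhigh pos (by rw [Nat.add_sub_cancel]; omega) hle
    have hmod_bot := mod_radixWeight_eq_of_digit_eq_zero hm (Nat.zero_le (y - 1)) hlow
    rw [radixWeight_mul_period hper, Nat.mod_eq_of_lt hlt, radixWeight_mul_period_add hper,
      mul_comm] at hmod_top
    rw [radixWeight_zero, Nat.mod_one] at hmod_bot
    refine mem_residueBlock_of_lt_of_mod_lt ?_ (hmod_bot ▸ one_pos)
    exact hmod_top ▸ Nat.mod_lt t (mul_pos (hpos _) (pow_pos (hpos m) n))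
  · exact radixWeight_dvd_radixWeight _ (by omega)
  · rw [zero_add, pow_succ]

lemma hasBlockCover_Tset (hm : 0 < m) (hp : ∀ i ∈ Icc 1 m, 2 ≤ p i) (n w : ℕ) {y : ℕ}
    (hy : y ∈ Icc 1 m) :
    HasBlockCover (cyclicBase p m) m n (Tset p m (W m) (n + 1) (W m ^ (n + 1)) w y) :=
  (lt_or_ge w n).elim (hasBlockCover_Tset_of_lt hm hp · hy) (hasBlockCover_Tset_of_le hm hp · hy)

/-- The repair bandwidth `b'(n, w, y)` of the node `(w, y)`, for any sequence of vectors `v` in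
place of the powers `ζ ^ (u * x)`. -/
noncomputable def repairBandwidth (k : Type*) {V : Type*} [Semiring k] [AddCommMonoid V]
    [Module k V] (v : ℕ → V) (p : ℕ → ℕ) (m r n w y : ℕ) : ℕ :=
  ∑ wz ∈ (range n ×ˢ Icc 1 m).erase (w, y),
    finrank k (repairSpan k v (Tset p m r n (r ^ n) w y) r (dwy p r wz.1 wz.2))

lemma repairBandwidth_le {k V : Type*} [Semiring k] [StrongRankCondition k] [AddCommMonoid V]
    [Module k V] [Module.Finite k V] (v : ℕ → V) (hm : 0 < m)
    (hp : ∀ i ∈ Icc 1 m, 2 ≤ p i) {r : ℕ} (hr : r = ∏ i ∈ Icc 1 m, p i) {n w y : ℕ}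
    (hV : finrank k V ≤ r ^ (n + 1)) (hw : w < n + 1) (hy : y ∈ Icc 1 m) :
    repairBandwidth k v p m r (n + 1) w y
      ≤ ((n + 1) * m - 1) * r ^ n + (r + m + 1) * r ^ (n + 1) := by
  have hper := cyclicBase_periodic p m
  obtain rfl : r = W m := hr.trans (radixWeight_cyclicBase_of_le le_rfl).symm
  obtain ⟨a, M, K, R, hT, hRM, hM, hKR, hl⟩ := hasBlockCover_Tset hm hp n w hy
  have hexcess := sum_rankExcess_le (two_le_cyclicBase hm hp) hper K a ((n + 1) * m)
  rw [hl, radixWeight_mul_period hper] at hexcess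
  set S := range (n + 1) ×ˢ Icc 1 m
  have hcard : #(S.erase (w, y)) = (n + 1) * m - 1 := by
    rw [card_erase_of_mem (mem_product.2 ⟨mem_range.2 hw, hy⟩)]
    simp
  calc repairBandwidth k v p m (W m) (n + 1) w y
      ≤ ∑ wz ∈ S.erase (w, y),
          (W m ^ n + rankExcess (cyclicBase p m) m K a (wz.1 * m + (wz.2 - 1))) := by
        refine sum_le_sum fun wz hwz => ?_
        rw [dwy_eq_radixWeight _ (mem_product.1 (mem_of_mem_erase hwz)).2, ← hKR]
        exact finrank_repairSpan_radixWeight_le v hT hRM hM (hl ▸ hV) _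
    _ ≤ ((n + 1) * m - 1) * W m ^ n
          + ∑ wz ∈ S, rankExcess (cyclicBase p m) m K a (wz.1 * m + (wz.2 - 1)) := by
        rw [sum_add_distrib, sum_const, hcard, smul_eq_mul]
        gcongr
        exact erase_subset _ _
    _ ≤ ((n + 1) * m - 1) * W m ^ n
          + (W m * W m ^ (n + 1) + (m + 1) * W m ^ (n + 1)) := by
        rw [sum_product_range_Icc]
        gcongr
    _ = _ := by ring

end Construction

lemma add_mul_lt_of_mul_add_one_lt {𝕜 : Type*} [Field 𝕜] [LinearOrder 𝕜]
    [IsStrictOrderedRing 𝕜] {r A C ε L : 𝕜} (hr : 0 < r) (hL : 0 < L)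
    (h : C * (r + 1) < ε * A) :
    A * L + C * (r * L) < ((r + 1) / r + ε) * A * (r * L) / (r + 1) := by
  rw [lt_div_iff₀ (by positivity)]
  calc (A * L + C * (r * L)) * (r + 1) = A * L * (r + 1) + C * (r + 1) * (r * L) := by ring
    _ < A * L * (r + 1) + ε * A * (r * L) := by gcongr
    _ = ((r + 1) / r + ε) * A * (r * L) := by field_simp

theorem stmt_17_general {m : ℕ} (hm : 0 < m) {p : ℕ → ℕ} (hp : ∀ i ∈ Icc 1 m, 2 ≤ p i) {r : ℕ}
    (hr : r = ∏ i ∈ Icc 1 m, p i) {ε : ℝ} (hε : 0 < ε) :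
    ∃ N : ℕ, ∀ n, N ≤ n → ∀ (k V : Type*) [Semiring k] [StrongRankCondition k] [AddCommMonoid V]
      [Module k V] [Module.Finite k V], finrank k V ≤ r ^ n → ∀ v : ℕ → V, ∀ w < n, ∀ y ∈ Icc 1 m,
        (repairBandwidth k v p m r n w y : ℝ)
          < ((r + 1) / r + ε) * (((n * m : ℕ) : ℝ) - 1) * (r ^ n : ℕ) / (r + 1) := by
  obtain ⟨N, hN⟩ := exists_nat_gt (((r + m + 1 : ℕ) : ℝ) * (r + 1) / ε)
  refine ⟨N + 1, fun n' hn' k V _ _ _ _ _ hV v w hw y hy => ?_⟩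
  obtain ⟨n, rfl⟩ : ∃ n, n' = n + 1 := ⟨n' - 1, by omega⟩
  have hr0 : 0 < r := hr ▸ prod_pos fun i hi => two_pos.trans_le (hp i hi)
  have hnodes : n + 1 ≤ (n + 1) * m := Nat.le_mul_of_pos_right _ hm
  have hlarge : ((r + m + 1 : ℕ) : ℝ) * (r + 1) < ε * (((n + 1) * m - 1 : ℕ) : ℝ) := by
    rw [div_lt_iff₀' hε] at hN
    refine hN.trans_le ?_
    gcongr
    omega
  calc (repairBandwidth k v p m r (n + 1) w y : ℝ)
      ≤ (((n + 1) * m - 1 : ℕ) : ℝ) * r ^ n + ((r + m + 1 : ℕ) : ℝ) * (r * r ^ n) := by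
        exact_mod_cast pow_succ' r n ▸ repairBandwidth_le v hm hp hr hV hw hy
    _ < ((r + 1) / r + ε) * (((n + 1) * m - 1 : ℕ) : ℝ) * (r * r ^ n) / (r + 1) :=
        add_mul_lt_of_mul_add_one_lt (by positivity) (by positivity) hlarge
    _ = _ := by rw [Nat.cast_sub (by omega), Nat.cast_one, Nat.cast_pow, pow_succ']

end

/-- **Corollary 7.** Fix primes `p 1, …, p m` (`m ≥ 2`) and
suppose `r̄ = p 1 ⋯ p m + 1` is a prime with `r̄ ≥ 5`.  For each `n' ≥ 2` build
the Construction-2 data from `p 1, …, p m` (so `n̄ = n'm`, `l = (r̄-1)^{n'}`,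
with `d_{w,y}` and `T_{w,y}` defined with respect to `r̄ - 1`), and for a prime
power `q = |B|`, a positive divisor `u` of `q-1`, and a primitive element `ζ` of
`F = GF(q^l)` let, for `w ∈ {1,…,n'-1}` and `y ∈ {1,…,m}`,
`b' = Σ_{(w',z) ≠ (w,y)} rank_B({ζ^{u(t+s·d_{w',z})} : t ∈ T_{w,y}, s ≤ r̄-2})`.
Then for every `ε > 0` there is `N` such that for all `n' ≥ N` and all such
`q, u, ζ, w, y` one has `b' < (r̄/(r̄-1) + ε)·(n̄-1)·l/r̄`; i.e. the ratio of
`b'` to the cut-set bound `(n̄-1)l/r̄` tends to `r̄/(r̄-1) ≤ 5/4` as `n̄ → ∞`. -/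
theorem stmt_17 (m : ℕ) (hm : 2 ≤ m) (p : ℕ → ℕ)
    (hp : ∀ i ∈ Finset.Icc 1 m, (p i).Prime)
    (rb : ℕ) (hrb : rb = (∏ i ∈ Finset.Icc 1 m, p i) + 1)
    (hrbprime : rb.Prime) (hrb5 : 5 ≤ rb) :
    ∀ ε : ℝ, 0 < ε → ∃ N : ℕ, ∀ n' : ℕ, N ≤ n' → 2 ≤ n' →
      ∀ (B F : Type) [Field B] [Field F] [Fintype B] [Fintype F]
        [Algebra B F], ∀ q : ℕ, Fintype.card B = q →
        Module.finrank B F = (rb - 1) ^ n' →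
        ∀ ζ : F, orderOf ζ = q ^ ((rb - 1) ^ n') - 1 →
        ∀ u : ℕ, 0 < u → u ∣ q - 1 →
        ∀ w ∈ Finset.Icc 1 (n' - 1), ∀ y ∈ Finset.Icc 1 m,
        ((∑ wz ∈ (Finset.range n' ×ˢ Finset.Icc 1 m).erase (w, y),
            Module.finrank B ↥(Submodule.span B
              {x : F | ∃ t ∈ Tset p m (rb - 1) n' ((rb - 1) ^ n') w y,
                ∃ s < rb - 1, x = ζ ^ (u * (t + s * dwy p (rb - 1) wz.1 wz.2))}) : ℕ) : ℝ)
          < ((rb : ℝ) / ((rb : ℝ) - 1) + ε) * (((n' * m : ℕ) : ℝ) - 1)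
              * ((rb - 1 : ℕ) ^ n' : ℕ) / rb := by
  subst hrb
  intro ε hε
  obtain ⟨N, hN⟩ := stmt_17_general (by omega) (fun i hi => (hp i hi).two_le) rfl hε
  refine ⟨N, fun n' hn' hn2 B F _ _ _ _ _ q _ hF ζ _ u _ _ w hw y hy => ?_⟩
  rw [Finset.mem_Icc] at hw
  rw [Nat.cast_add_one, add_sub_cancel_right]
  exact hN n' hn' B F hF.le (fun x => ζ ^ (u * x)) w (by omega) y hy
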